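/- Let E be a finite set, let 𝒜 = (A_1, …, A_r) be a family of r subsets of E whose rank (maximum cardinality of a partial transversal) is r, fix i ∈ {1, …, r}, and let e ∈ E ∖ A_i. Then the family (A_1, …, A_{i-1}, A_i ∪ {e}, A_{i+1}, …, A_r) has exactly the same partial transversals as 𝒜 if and only if e belongs to every maximum-cardinality partial transversal of 𝒜 that is contained in E ∖ A_i (i.e., if and only if e is a coloop of the deletion M ∖ A_i of the transversal matroid M = M[𝒜]). -/

import Mathlib

/-- `S` is a partial transversal of the family `A : ι → Set α`: there is an injective map
`f : S → ι` with `s ∈ A (f s)` for all `s ∈ S`. -/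
def IsPartialTransversal {α ι : Type*} (A : ι → Set α) (S : Finset α) : Prop :=
  ∃ f : S → ι, Function.Injective f ∧ ∀ s : S, (s : α) ∈ A (f s)

/-!
A partial transversal `S` of `A` that avoids `A i` and omits `e` extends by `e`, represented by `i`,
to one of the enlarged family. If that family has no new partial transversals, `S` is not maximum.

Conversely, suppose that `S` is a partial transversal of the enlarged family but not of `A`. By
Hall's theorem some `X ⊆ S` meets only members of `A` with indices in a set `N` smaller than `X`.
Since the enlarged family represents `X`, the element `e` lies in `X` and is represented by `i ∉ N`.
So `Y = X \ {e}` avoids `A i` and is matched onto `N`. In a maximum partial transversal avoiding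
`A i`, the elements represented in `N` can be traded for `Y`. The result is still maximum, and it
omits `e`, since all the indices available to `e` lie in `N` and are taken by `Y`.
-/

section PartialTransversal

open Finset

variable {α ι : Type*} {A : ι → Set α} {S T Y : Finset α} {N : Finset ι} {i : ι} {e : α}

namespace IsPartialTransversal

theorem of_injOn {f : α → ι} (hf : Set.InjOn f S) (hfA : ∀ s ∈ S, s ∈ A (f s)) :
    IsPartialTransversal A S :=
  ⟨fun s ↦ f s, hf.injective, fun s ↦ hfA s s.2⟩

theorem exists_injOn [Nonempty ι] (hS : IsPartialTransversal A S) :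
    ∃ f : α → ι, Set.InjOn f S ∧ ∀ s ∈ S, s ∈ A (f s) := by
  obtain ⟨f, hf, hfA⟩ := hS
  obtain ⟨g, hg⟩ : ∃ g : α → ι, ∀ s : S, g s = f s :=
    ⟨Function.extend Subtype.val f fun _ ↦ Classical.arbitrary ι,
      Subtype.val_injective.extend_apply f _⟩
  refine ⟨g, fun s hs t ht hst ↦ ?_, fun s hs ↦ (hg ⟨s, hs⟩).symm ▸ hfA ⟨s, hs⟩⟩
  exact congrArg Subtype.val (hf (((hg ⟨s, hs⟩).symm.trans hst).trans (hg ⟨t, ht⟩)))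

theorem empty : IsPartialTransversal A ∅ :=
  ⟨fun s ↦ absurd s.2 (notMem_empty _), fun s ↦ absurd s.2 (notMem_empty _),
    fun s ↦ absurd s.2 (notMem_empty _)⟩

theorem mono {B : ι → Set α} (hAB : ∀ j, A j ⊆ B j) (hS : IsPartialTransversal A S) :
    IsPartialTransversal B S :=
  let ⟨f, hf, hfA⟩ := hS
  ⟨f, hf, fun s ↦ hAB _ (hfA s)⟩

theorem card_le [Fintype ι] (hS : IsPartialTransversal A S) : #S ≤ Fintype.card ι := by
  obtain ⟨f, hf, -⟩ := hS
  simpa only [Fintype.card_coe] using Fintype.card_le_of_injective f hf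

theorem union [DecidableEq α] {f g : α → ι} (hST : Disjoint S T)
    (hf : Set.InjOn f S) (hfA : ∀ s ∈ S, s ∈ A (f s))
    (hg : Set.InjOn g T) (hgA : ∀ t ∈ T, t ∈ A (g t))
    (hfg : ∀ s ∈ S, ∀ t ∈ T, f s ≠ g t) :
    IsPartialTransversal A (S ∪ T) := by
  have eq_f : ∀ s ∈ S, S.piecewise f g s = f s := fun s hs ↦ piecewise_eq_of_mem S f g hs
  have eq_g : ∀ t ∈ T, S.piecewise f g t = g t := fun t ht ↦
    piecewise_eq_of_notMem S f g (disjoint_right.1 hST ht)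
  refine of_injOn (f := S.piecewise f g) ?_ fun x hx ↦ ?_
  · rw [coe_union, Set.injOn_union (disjoint_coe.2 hST)]
    refine ⟨hf.congr fun s hs ↦ (eq_f s hs).symm, hg.congr fun t ht ↦ (eq_g t ht).symm, ?_⟩
    intro s hs t ht
    rw [eq_f s hs, eq_g t ht]
    exact hfg s hs t ht
  · rcases mem_union.1 hx with hx | hx
    · exact eq_f x hx ▸ hfA x hx
    · exact eq_g x hx ▸ hgA x hx

theorem exists_union_card_le [DecidableEq α] [Nonempty ι]
    (hY : IsPartialTransversal A Y) (hYN : ∀ y ∈ Y, ∀ j, y ∈ A j → j ∈ N) (hcard : #N ≤ #Y)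
    (hT : IsPartialTransversal A T) :
    ∃ U ⊆ T, (∀ u ∈ U, ∃ j ∉ N, u ∈ A j) ∧ IsPartialTransversal A (Y ∪ U) ∧ #T ≤ #(Y ∪ U) := by
  classical
  obtain ⟨f, hf, hfA⟩ := hY.exists_injOn
  obtain ⟨g, hg, hgA⟩ := hT.exists_injOn
  have hUN : ∀ u ∈ T.filter (g · ∉ N), u ∈ T ∧ g u ∉ N := fun u hu ↦ mem_filter.1 hu
  have hdisj : Disjoint Y (T.filter (g · ∉ N)) := disjoint_right.2 fun u hu huY ↦
    (hUN u hu).2 (hYN u huY _ (hgA u (hUN u hu).1))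
  refine ⟨T.filter (g · ∉ N), filter_subset _ _,
    fun u hu ↦ ⟨g u, (hUN u hu).2, hgA u (hUN u hu).1⟩, ?_, ?_⟩
  · refine union hdisj hf hfA (hg.mono (filter_subset _ _)) (fun u hu ↦ hgA u (hUN u hu).1) ?_
    intro y hy u hu hyu
    exact (hUN u hu).2 (hyu ▸ hYN y hy _ (hfA y hy))
  · have hTN : #(T.filter (g · ∈ N)) ≤ #N :=
      card_le_card_of_injOn g (fun t ht ↦ (mem_filter.1 ht).2) (hg.mono (filter_subset _ _))
    calc #T = #(T.filter (g · ∈ N)) + #(T.filter (g · ∉ N)) :=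
          (card_filter_add_card_filter_not _).symm
      _ ≤ #Y + #(T.filter (g · ∉ N)) := Nat.add_le_add_right (hTN.trans hcard) _
      _ = #(Y ∪ T.filter (g · ∉ N)) := (card_union_of_disjoint hdisj).symm

end IsPartialTransversal

theorem exists_card_lt_of_not_isPartialTransversal [Finite ι] (hS : ¬ IsPartialTransversal A S) :
    ∃ X ⊆ S, ∃ N : Finset ι, #N < #X ∧ ∀ x ∈ X, ∀ j, x ∈ A j → j ∈ N := by
  classical
  have := Fintype.ofFinite ι
  obtain ⟨X, hX⟩ : ∃ X : Finset S, #{j | ∃ x ∈ X, (x : α) ∈ A j} < #X := by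
    by_contra! hall
    exact hS ((Fintype.all_card_le_filter_rel_iff_exists_injective
      fun (s : S) j ↦ (s : α) ∈ A j).1 hall)
  refine ⟨X.map (.subtype _), map_subtype_subset X, _, hX.trans_eq (card_map _).symm, ?_⟩
  intro x hx j hxj
  obtain ⟨s, hs, rfl⟩ := mem_map.1 hx
  exact mem_filter.2 ⟨mem_univ j, s, hs, hxj⟩

theorem exists_isPartialTransversal_card_max [Finite ι] (A : ι → Set α) (B : Set α) :
    ∃ T : Finset α, IsPartialTransversal A T ∧ (∀ x ∈ T, x ∉ B) ∧
      ∀ S : Finset α, IsPartialTransversal A S → (∀ x ∈ S, x ∉ B) → #S ≤ #T := by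
  have := Fintype.ofFinite ι
  let F : Set (Finset α) := {T | IsPartialTransversal A T ∧ ∀ x ∈ T, x ∉ B}
  have hfin : (card '' F).Finite := (Set.finite_Iic (Fintype.card ι)).subset <|
    Set.image_subset_iff.2 fun T hT ↦ hT.1.card_le
  have hne : F.Nonempty := ⟨∅, .empty, fun x hx ↦ absurd hx (notMem_empty x)⟩
  obtain ⟨T, ⟨hT, hTB⟩, hmax⟩ := Set.Finite.exists_maximalFor' card F hfin hne
  exact ⟨T, hT, hTB, fun S hS hSB ↦ (le_total _ _).elim id (hmax ⟨hS, hSB⟩)⟩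

variable [DecidableEq ι]

theorem mem_update_union_singleton_iff {x : α} {j : ι} :
    x ∈ Function.update A i (A i ∪ {e}) j ↔ x ∈ A j ∨ j = i ∧ x = e := by
  obtain rfl | hj := eq_or_ne j i
  · simp [or_comm]
  · simp [hj]

theorem IsPartialTransversal.insert_update [DecidableEq α] (hS : IsPartialTransversal A S)
    (hSi : ∀ x ∈ S, x ∉ A i) (he : e ∉ S) :
    IsPartialTransversal (Function.update A i (A i ∪ {e})) (insert e S) := by
  have : Nonempty ι := ⟨i⟩
  obtain ⟨f, hf, hfA⟩ := hS.exists_injOn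
  rw [insert_eq]
  refine union (f := fun _ ↦ i) (disjoint_singleton_left.2 he) (by simp) ?_ hf
    (fun s hs ↦ mem_update_union_singleton_iff.2 (.inl (hfA s hs))) ?_
  · intro s hs
    exact mem_update_union_singleton_iff.2 (.inr ⟨rfl, mem_singleton.1 hs⟩)
  · rintro - - s hs rfl
    exact hSi s hs (hfA s hs)

theorem IsPartialTransversal.exists_tight_of_update [Finite ι]
    (hS : IsPartialTransversal (Function.update A i (A i ∪ {e})) S)
    (hSA : ¬ IsPartialTransversal A S) :
    ∃ (Y : Finset α) (N : Finset ι), IsPartialTransversal A Y ∧ #N ≤ #Y ∧ e ∉ Y ∧ i ∉ N ∧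
      (∀ y ∈ Y, ∀ j, y ∈ A j → j ∈ N) ∧ ∀ j, e ∈ A j → j ∈ N := by
  classical
  have : Nonempty ι := ⟨i⟩
  obtain ⟨f, hf, hfA⟩ := hS.exists_injOn
  obtain ⟨X, hXS, N, hNX, hXN⟩ := exists_card_lt_of_not_isPartialTransversal hSA
  have hfX : Set.InjOn f X := hf.mono hXS
  have hfA' : ∀ x ∈ X, x ∈ A (f x) ∨ f x = i ∧ x = e := fun x hx ↦
    mem_update_union_singleton_iff.1 (hfA x (hXS hx))
  obtain ⟨x, hxX, hxN⟩ : ∃ x ∈ X, f x ∉ N := by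
    by_contra! hmaps
    exact hNX.not_ge (card_le_card_of_injOn f hmaps hfX)
  obtain ⟨rfl, rfl⟩ := (hfA' x hxX).resolve_left fun hxA ↦ hxN (hXN x hxX _ hxA)
  refine ⟨X.erase x, N, .of_injOn (hfX.mono (erase_subset x X)) ?_, ?_, notMem_erase x X, hxN,
    fun y hy ↦ hXN y (mem_of_mem_erase hy), hXN x hxX⟩
  · intro y hy
    exact (hfA' y (mem_of_mem_erase hy)).resolve_right fun h ↦ ne_of_mem_erase hy h.2
  · rw [card_erase_of_mem hxX]
    exact Nat.le_sub_one_of_lt hNX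

theorem exists_card_max_notMem_of_update [Finite ι]
    (hS : IsPartialTransversal (Function.update A i (A i ∪ {e})) S)
    (hSA : ¬ IsPartialTransversal A S) :
    ∃ Z : Finset α, IsPartialTransversal A Z ∧ (∀ x ∈ Z, x ∉ A i) ∧
      (∀ T : Finset α, IsPartialTransversal A T → (∀ x ∈ T, x ∉ A i) → #T ≤ #Z) ∧ e ∉ Z := by
  classical
  have : Nonempty ι := ⟨i⟩
  obtain ⟨Y, N, hY, hNY, heY, hiN, hYN, heN⟩ := hS.exists_tight_of_update hSA
  obtain ⟨T, hT, hTi, hmax⟩ := exists_isPartialTransversal_card_max A (A i)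
  obtain ⟨U, hUT, hUN, hYU, hcard⟩ := hY.exists_union_card_le hYN hNY hT
  refine ⟨Y ∪ U, hYU, ?_, fun S hS hSi ↦ (hmax S hS hSi).trans hcard, ?_⟩
  · intro x hx hxi
    exact (mem_union.1 hx).elim (fun hxY ↦ hiN (hYN x hxY i hxi)) fun hxU ↦ hTi x (hUT hxU) hxi
  · intro he
    obtain ⟨j, hjN, hej⟩ := hUN e ((mem_union.1 he).resolve_left heY)
    exact hjN (heN j hej)

theorem bondy_welsh_coloop_extension_general [Finite ι] (A : ι → Set α) (i : ι) (e : α)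
    (he : e ∉ A i) :
    (∀ S : Finset α,
        IsPartialTransversal (Function.update A i (A i ∪ {e})) S ↔
          IsPartialTransversal A S) ↔
    (∀ S : Finset α, IsPartialTransversal A S → (∀ x ∈ S, x ∉ A i) →
      (∀ T : Finset α, IsPartialTransversal A T → (∀ x ∈ T, x ∉ A i) → T.card ≤ S.card) →
      e ∈ S) := by
  classical
  constructor
  · intro hext S hS hSi hmax
    by_contra heS
    have hins : IsPartialTransversal A (insert e S) := (hext _).1 (hS.insert_update hSi heS)
    have hle : #(insert e S) ≤ #S := hmax _ hins (forall_mem_insert _ _ _ |>.2 ⟨he, hSi⟩)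
    exact heS (insert_eq_self.1 (eq_of_subset_of_card_le (subset_insert e S) hle).symm)
  · intro hcoloop S
    refine ⟨fun hS ↦ ?_, .mono fun j x hx ↦ mem_update_union_singleton_iff.2 (.inl hx)⟩
    by_contra hSA
    obtain ⟨Z, hZ, hZi, hmax, heZ⟩ := exists_card_max_notMem_of_update hS hSA
    exact heZ (hcoloop Z hZ hZi hmax)

end PartialTransversal

/-- (Bondy–Welsh) Let `A` be a family of `r` subsets of a finite set of rank `r`, let
`i ∈ {1, …, r}` and `e ∉ A i`. Then the family obtained by replacing `A i` with `A i ∪ {e}`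
has the same partial transversals as `A` if and only if `e` belongs to every
maximum-cardinality partial transversal of `A` contained in the complement of `A i`
(i.e. `e` is a coloop of `M[A] \ A i`). -/
theorem bondy_welsh_coloop_extension
    {α : Type*} [Fintype α] (r : ℕ) (A : Fin r → Set α)
    (hex : ∃ B : Finset α, IsPartialTransversal A B ∧ B.card = r)
    (hub : ∀ S : Finset α, IsPartialTransversal A S → S.card ≤ r)
    (i : Fin r) (e : α) (he : e ∉ A i) :
    (∀ S : Finset α,
        IsPartialTransversal (Function.update A i (A i ∪ {e})) S ↔
          IsPartialTransversal A S) ↔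
    (∀ S : Finset α, IsPartialTransversal A S → (∀ x ∈ S, x ∉ A i) →
      (∀ T : Finset α, IsPartialTransversal A T → (∀ x ∈ T, x ∉ A i) → T.card ≤ S.card) →
      e ∈ S) :=
  bondy_welsh_coloop_extension_general A i e he
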